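/- (Similarity of costs) Let G(x,u) = A x + B u + f(x,u) with ‖f(x,u)‖ ≤ β(‖x‖² + ‖u‖²) for ‖x‖ + ‖u‖ ≤ r_nl; let γ ∈ (0,1], Q ⪰ I, R ⪰ I, and K be such that √γ·(A+BK) is stable with Lyapunov solution P. Let x_{t+1} = √γ·G(x_t, K x_t) be the damped nonlinear trajectory from x₀ and J_nl(K | γ, x₀) := Σ_{t=0}^∞ x_tᵀ (Q + KᵀRK) x_t the nonlinear cost. If x₀ᵀ P x₀ ≤ r_nl²/(4β²‖P‖_op³), then | J_nl(K | γ, x₀) − x₀ᵀ P x₀ | ≤ 8 β ‖x₀‖³ ‖P‖_op⁴. -/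

import Mathlib

open Matrix

/-- A real square matrix is stable if every complex eigenvalue has modulus `< 1`. -/
def IsStable {n : ℕ} (M : Matrix (Fin n) (Fin n) ℝ) : Prop :=
  ∀ μ ∈ spectrum ℂ (M.map Complex.ofReal), ‖μ‖ < 1

/-- Euclidean operator norm of a real matrix. -/
noncomputable def opNorm {p q : ℕ} (M : Matrix (Fin p) (Fin q) ℝ) : ℝ :=
  ‖LinearMap.toContinuousLinearMap (Matrix.toEuclideanLin M)‖

/-- Euclidean norm of a vector in `ℝ^n`. -/
noncomputable def evnorm {n : ℕ} (x : Fin n → ℝ) : ℝ :=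
  ‖(WithLp.equiv 2 (Fin n → ℝ)).symm x‖

/-- `P_{K,γ} = Σ_t γ^t ((A+BK)^t)ᵀ (Q + KᵀRK) (A+BK)^t`, the solution of the discounted
Lyapunov equation when `√γ (A+BK)` is stable. -/
noncomputable def lyapP {d m : ℕ} (A : Matrix (Fin d) (Fin d) ℝ) (B : Matrix (Fin d) (Fin m) ℝ)
    (Q : Matrix (Fin d) (Fin d) ℝ) (R : Matrix (Fin m) (Fin m) ℝ)
    (K : Matrix (Fin m) (Fin d) ℝ) (γ : ℝ) : Matrix (Fin d) (Fin d) ℝ :=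
  ∑' t : ℕ, γ ^ t • (((A + B * K) ^ t)ᵀ * (Q + Kᵀ * R * K) * (A + B * K) ^ t)

section frob
open Filter Topology
open scoped Matrix.Norms.Frobenius

lemma aux_pow_bound {d : ℕ} (N : Matrix (Fin d) (Fin d) ℝ) (h : IsStable N) :
    ∃ r : ℝ, 0 ≤ r ∧ r < 1 ∧ ∀ᶠ t : ℕ in atTop, ‖N ^ t‖ ≤ r ^ t := by
  rcases Nat.eq_zero_or_pos d with rfl | hd
  · refine ⟨0, le_rfl, one_pos, Eventually.of_forall fun t => ?_⟩
    rw [Subsingleton.elim (N ^ t) 0]; simp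
  have : NeZero d := ⟨hd.ne'⟩
  set M : Matrix (Fin d) (Fin d) ℂ := N.map Complex.ofReal with hM
  have : CompleteSpace (Matrix (Fin d) (Fin d) ℂ) := FiniteDimensional.complete ℂ _
  have h1 : spectralRadius ℂ M < (1 : NNReal) :=
    spectrum.spectralRadius_lt_of_forall_lt M (fun μ hμ => by
      have := h μ hμ
      exact_mod_cast this)
  obtain ⟨r, hr1, hr2⟩ := ENNReal.lt_iff_exists_nnreal_btwn.1 h1
  have hr2' : r < 1 := by exact_mod_cast hr2
  refine ⟨r, r.2, by exact_mod_cast hr2', ?_⟩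
  have h2 := spectrum.pow_nnnorm_pow_one_div_tendsto_nhds_spectralRadius M
  filter_upwards [h2.eventually (gt_mem_nhds hr1), eventually_gt_atTop 0] with t ht ht0
  have e1 : ‖N ^ t‖₊ = ‖M ^ t‖₊ := by
    have : M ^ t = (N ^ t).map Complex.ofReal := by
      have := (map_pow (Complex.ofRealHom.mapMatrix) N t)
      exact this.symm
    rw [this]
    exact (Matrix.frobenius_nnnorm_map_eq _ _ (fun a => by simp)).symm
  have e2 : (‖M ^ t‖₊ : ENNReal) ≤ (r : ENNReal) ^ t := by
    have h3 := ENNReal.rpow_le_rpow ht.le (Nat.cast_nonneg t : (0 : ℝ) ≤ (t : ℝ))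
    rw [← ENNReal.rpow_mul, one_div, inv_mul_cancel₀ (by exact_mod_cast ht0.ne'),
      ENNReal.rpow_one, ENNReal.rpow_natCast] at h3
    exact h3
  have e3 : ‖M ^ t‖₊ ≤ r ^ t := by exact_mod_cast e2
  rw [← e1] at e3
  exact_mod_cast e3

lemma aux_summable {d : ℕ} (N Q : Matrix (Fin d) (Fin d) ℝ) (h : IsStable N) :
    Summable (fun t : ℕ => (N ^ t)ᵀ * Q * N ^ t) := by
  have : CompleteSpace (Matrix (Fin d) (Fin d) ℝ) := FiniteDimensional.complete ℝ _
  obtain ⟨r, h0, h1, hb⟩ := aux_pow_bound N h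
  have hg : Summable (fun t : ℕ => ‖Q‖ * (r ^ 2) ^ t) :=
    (summable_geometric_of_lt_one (by positivity) (by nlinarith)).mul_left _
  refine hg.of_norm_bounded_eventually_nat ?_
  filter_upwards [hb] with t ht
  calc ‖(N ^ t)ᵀ * Q * N ^ t‖ ≤ ‖(N ^ t)ᵀ‖ * ‖Q‖ * ‖N ^ t‖ :=
        (Matrix.frobenius_norm_mul _ _).trans
          (mul_le_mul_of_nonneg_right (Matrix.frobenius_norm_mul _ _) (norm_nonneg _))
    _ ≤ r ^ t * ‖Q‖ * r ^ t := by rw [Matrix.frobenius_norm_transpose]; gcongr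
    _ = ‖Q‖ * (r ^ 2) ^ t := by ring
end frob

lemma aux_lyap {d : ℕ} (N Q : Matrix (Fin d) (Fin d) ℝ)
    (hs : Summable (fun t : ℕ => (N ^ t)ᵀ * Q * N ^ t)) (P : Matrix (Fin d) (Fin d) ℝ)
    (hP : P = ∑' t : ℕ, (N ^ t)ᵀ * Q * N ^ t) : P = Q + Nᵀ * P * N := by
  have h := hs.tsum_eq_zero_add
  rw [← hP] at h
  nth_rewrite 1 [h]
  have h2 : HasSum (fun t : ℕ => (N ^ t)ᵀ * Q * N ^ t) P := hP ▸ hs.hasSum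
  have h3 : HasSum (fun t : ℕ => Nᵀ * ((N ^ t)ᵀ * Q * N ^ t) * N) (Nᵀ * P * N) :=
    h2.map ((AddMonoidHom.mulRight N).comp (AddMonoidHom.mulLeft Nᵀ)) (by
      show Continuous fun M : Matrix (Fin d) (Fin d) ℝ => Nᵀ * M * N
      fun_prop)
  rw [← h3.tsum_eq]
  simp [pow_succ, Matrix.transpose_mul, Matrix.mul_assoc]

lemma aux_symm {d : ℕ} (N Q : Matrix (Fin d) (Fin d) ℝ) (hQ : Qᵀ = Q)
    (P : Matrix (Fin d) (Fin d) ℝ)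
    (hP : P = ∑' t : ℕ, (N ^ t)ᵀ * Q * N ^ t) : Pᵀ = P := by
  rw [hP, Matrix.transpose_tsum]
  simp [Matrix.transpose_mul, Matrix.mul_assoc, hQ]

lemma aux_quad {d : ℕ} (N P : Matrix (Fin d) (Fin d) ℝ) (x : Fin d → ℝ) :
    x ⬝ᵥ (Nᵀ * P * N).mulVec x = (N.mulVec x) ⬝ᵥ P.mulVec (N.mulVec x) := by
  rw [← Matrix.mulVec_mulVec, ← Matrix.mulVec_mulVec, Matrix.dotProduct_mulVec x Nᵀ,
    Matrix.vecMul_transpose]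

lemma aux_nonneg {d : ℕ} (N Q : Matrix (Fin d) (Fin d) ℝ)
    (hQ : ∀ x : Fin d → ℝ, 0 ≤ x ⬝ᵥ Q.mulVec x)
    (hs : Summable (fun t : ℕ => (N ^ t)ᵀ * Q * N ^ t)) (P : Matrix (Fin d) (Fin d) ℝ)
    (hP : P = ∑' t : ℕ, (N ^ t)ᵀ * Q * N ^ t) (x : Fin d → ℝ) : 0 ≤ x ⬝ᵥ P.mulVec x := by
  have h2 : HasSum (fun t : ℕ => (N ^ t)ᵀ * Q * N ^ t) P := hP ▸ hs.hasSum
  let φ : Matrix (Fin d) (Fin d) ℝ →+ ℝ :=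
    { toFun := fun M => x ⬝ᵥ M.mulVec x
      map_zero' := by simp
      map_add' := fun a b => by simp [Matrix.add_mulVec] }
  have hφ : Continuous φ := by
    show Continuous fun M : Matrix (Fin d) (Fin d) ℝ => x ⬝ᵥ M.mulVec x
    fun_prop
  have h3 := h2.map φ hφ
  refine h3.nonneg fun t => ?_
  show 0 ≤ x ⬝ᵥ ((N ^ t)ᵀ * Q * N ^ t).mulVec x
  rw [aux_quad]; exact hQ _

lemma aux_cs {d : ℕ} (P : Matrix (Fin d) (Fin d) ℝ) (hsym : Pᵀ = P)
    (hn : ∀ x : Fin d → ℝ, 0 ≤ x ⬝ᵥ P.mulVec x) (x y : Fin d → ℝ) :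
    (x + y) ⬝ᵥ P.mulVec (x + y) = x ⬝ᵥ P.mulVec x + 2 * (x ⬝ᵥ P.mulVec y) + y ⬝ᵥ P.mulVec y
    ∧ (x ⬝ᵥ P.mulVec y) ^ 2 ≤ (x ⬝ᵥ P.mulVec x) * (y ⬝ᵥ P.mulVec y) := by
  have hc : y ⬝ᵥ P.mulVec x = x ⬝ᵥ P.mulVec y := by
    rw [Matrix.dotProduct_mulVec, ← Matrix.mulVec_transpose, hsym, dotProduct_comm]
  constructor
  · simp only [Matrix.mulVec_add, add_dotProduct, dotProduct_add, hc]; ring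
  · have := discrim_le_zero (a := y ⬝ᵥ P.mulVec y) (b := 2 * (x ⬝ᵥ P.mulVec y))
      (c := x ⬝ᵥ P.mulVec x) (fun s => by
        have h := hn (x + s • y)
        simp only [Matrix.mulVec_add, add_dotProduct, dotProduct_add, Matrix.mulVec_smul,
          smul_dotProduct, dotProduct_smul, hc, smul_eq_mul] at h
        linarith)
    unfold discrim at this
    nlinarith

lemma aux_sq {n : ℕ} (x : Fin n → ℝ) : x ⬝ᵥ x = evnorm x ^ 2 := by
  unfold evnorm
  rw [EuclideanSpace.real_norm_sq_eq]
  simp [dotProduct, sq]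

lemma aux_evn {n : ℕ} (x : Fin n → ℝ) : 0 ≤ evnorm x := norm_nonneg _

lemma aux_op {d : ℕ} (P : Matrix (Fin d) (Fin d) ℝ) (x : Fin d → ℝ) :
    x ⬝ᵥ P.mulVec x ≤ opNorm P * evnorm x ^ 2 := by
  have h1 := ContinuousLinearMap.le_opNorm
    (LinearMap.toContinuousLinearMap (Matrix.toEuclideanLin P)) (WithLp.toLp 2 x)
  have h2 := real_inner_le_norm (WithLp.toLp 2 (P.mulVec x)) (WithLp.toLp 2 x)
  rw [EuclideanSpace.inner_toLp_toLp] at h2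
  have h3 : LinearMap.toContinuousLinearMap (Matrix.toEuclideanLin P) (WithLp.toLp 2 x)
    = WithLp.toLp 2 (P.mulVec x) := rfl
  rw [h3] at h1
  have h4 : evnorm x = ‖(WithLp.toLp 2 x : EuclideanSpace ℝ (Fin d))‖ := rfl
  have h5 : 0 ≤ evnorm x := norm_nonneg _
  rw [← h4] at h1 h2
  have h6 : x ⬝ᵥ star (P.mulVec x) = x ⬝ᵥ P.mulVec x := rfl
  rw [h6] at h2
  have h7 := mul_le_mul_of_nonneg_right h1 h5
  unfold opNorm
  linarith

lemma aux_sqle {a b : ℝ} (h : a ^ 2 ≤ b ^ 2) (hb : 0 ≤ b) : a ≤ b :=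
  (abs_le_of_sq_le_sq' h hb).2

lemma aux_p (p z : ℝ) (hp : 1 ≤ p) (h : 4 * p ^ 2 * (p * z) ≤ p - 1) : z ≤ 1 / 16 := by
  have h3 : 4 * (p - 1) ≤ p ^ 3 := by
    nlinarith [mul_nonneg (by linarith : 0 ≤ p) (sq_nonneg (p - 7 / 6)), sq_nonneg (p - 7 / 6)]
  have h4 : 0 < p ^ 3 := by positivity
  have h5 : p ^ 3 * z ≤ p ^ 3 * (1 / 16) := by linarith
  exact le_of_mul_le_mul_left h5 h4

set_option maxHeartbeats 1000000 in
lemma aux_step (V c E b W p β r ef : ℝ) (hβ : 1 ≤ β) (hr0 : 0 < r) (hr : r ≤ 1) (hp : 1 ≤ p)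
    (hc0 : 0 ≤ c) (hVc : 0 ≤ V - c) (hVp : V ≤ p * c)
    (hb : b ^ 2 ≤ (V - c) * E) (hE0 : 0 ≤ E) (hE : E ≤ p * ef ^ 2) (hef0 : 0 ≤ ef)
    (hef : ef ≤ β * c) (hW : W = (V - c) + 2 * b + E)
    (hV : V ≤ r ^ 2 / (4 * β ^ 2 * p ^ 3)) :
    W ≤ V - c / 4 ∧ |W - (V - c)| ≤ 2 * (β * √p * √V) * c := by
  have hp0 : 0 < p := by linarith
  have hV' : 4 * β ^ 2 * p ^ 3 * V ≤ 1 := by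
    rw [le_div_iff₀ (by positivity)] at hV
    nlinarith
  set s := β * √p with hs
  have hs0 : 0 < s := by positivity
  have hs2 : s ^ 2 = β ^ 2 * p := by rw [hs, mul_pow, Real.sq_sqrt hp0.le]
  have hV0 : 0 ≤ V := by linarith
  have hEs : E ≤ (s * c) ^ 2 := by
    rw [mul_pow, hs2]
    calc E ≤ p * ef ^ 2 := hE
      _ ≤ p * (β * c) ^ 2 := by gcongr
      _ = _ := by ring
  set u := √(V - c) with hu
  set v := √V with hv
  have hu0 : 0 ≤ u := Real.sqrt_nonneg _
  have hv0 : 0 ≤ v := Real.sqrt_nonneg _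
  have hu2 : u ^ 2 = V - c := Real.sq_sqrt hVc
  have hv2 : v ^ 2 = V := Real.sq_sqrt hV0
  have huv : u ≤ v := Real.sqrt_le_sqrt (by linarith)
  clear_value u v s
  have hbs : |b| ≤ u * (s * c) := by
    apply abs_le_of_sq_le_sq _ (by positivity)
    calc b ^ 2 ≤ (V - c) * E := hb
      _ ≤ (V - c) * (s * c) ^ 2 := by gcongr
      _ = _ := by rw [mul_pow u, hu2]
  have hsv2 : 4 * p ^ 2 * (s * v) ^ 2 ≤ 1 := by
    rw [mul_pow, hs2, hv2]; nlinarith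
  have hsv : p * (s * v) ≤ 1 / 2 := by
    refine aux_sqle ?_ (by norm_num)
    nlinarith
  have hsv' : s * v ≤ 1 / 2 := by
    have : 0 ≤ s * v := by positivity
    nlinarith
  -- u² p ≤ v² (p - 1)
  have hup : p * u ^ 2 ≤ (p - 1) * v ^ 2 := by rw [hu2, hv2]; nlinarith
  have hsu : s * u ≤ 1 / 4 := by
    refine aux_sqle ?_ (by norm_num)
    have h1 : p * (s * u) ^ 2 ≤ (p - 1) * (s * v) ^ 2 := by
      have := mul_le_mul_of_nonneg_left hup (sq_nonneg s)
      nlinarith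
    have h2 : 4 * p ^ 2 * (p * (s * u) ^ 2) ≤ (p - 1) := by
      calc 4 * p ^ 2 * (p * (s * u) ^ 2) ≤ 4 * p ^ 2 * ((p - 1) * (s * v) ^ 2) := by gcongr
        _ = (p - 1) * (4 * p ^ 2 * (s * v) ^ 2) := by ring
        _ ≤ (p - 1) * 1 := by gcongr
        _ = p - 1 := by ring
    have := aux_p p _ hp h2
    linarith
  have hsc : s ^ 2 * c ≤ 1 / 4 := by
    have : s ^ 2 * c ≤ s ^ 2 * V := by gcongr; linarith
    have h2 : s ^ 2 * V = (s * v) ^ 2 := by rw [mul_pow s v, hv2]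
    have : 0 ≤ s * v := by positivity
    nlinarith
  have habs := abs_le.1 hbs
  constructor
  · rw [hW]
    have k1 : u * (s * c) ≤ 1 / 4 * c := by
      have := mul_le_mul_of_nonneg_right hsu hc0
      linarith
    have k2 : (s * c) ^ 2 ≤ 1 / 4 * c := by
      have := mul_le_mul_of_nonneg_right hsc hc0
      linarith
    linarith [habs.2]
  · have e : W - (V - c) = 2 * b + E := by rw [hW]; ring
    have hcuv : c = (v - u) * (v + u) := by nlinarith
    have key : s ^ 2 * c + 2 * (s * u) ≤ 2 * (s * v) := by
      have : s * (v + u) ≤ 1 := by nlinarith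
      have h5 := mul_le_mul_of_nonneg_left this (mul_nonneg hs0.le (sub_nonneg.2 huv))
      rw [hcuv]
      nlinarith [mul_nonneg hs0.le (sub_nonneg.2 huv)]
    have := mul_le_mul_of_nonneg_right key hc0
    rw [e, abs_le]
    have k3 : (s * c) ^ 2 + 2 * (u * (s * c)) ≤ 2 * (s * v) * c := by linarith
    constructor
    · linarith [habs.1, sq_nonneg (s * c)]
    · linarith [habs.2]

lemma aux_sum (V c : ℕ → ℝ) (p s : ℝ) (hs : 0 ≤ s) (hc : ∀ t, 0 ≤ c t) (hV : ∀ t, 0 ≤ V t)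
    (hVp : ∀ t, V t ≤ p * c t)
    (h : ∀ t, V t ≤ V 0 → V (t + 1) ≤ V t - c t / 4 ∧
      |V (t + 1) - (V t - c t)| ≤ 2 * (s * √(V t)) * c t) :
    Summable c ∧ |(∑' t, c t) - V 0| ≤ 8 * s * √(V 0) * V 0 := by
  have hle : ∀ t, V t ≤ V 0 := by
    intro t
    induction t with
    | zero => exact le_rfl
    | succ t ih => have := (h t ih).1; have := hc t; linarith
  have hsum : ∀ T, ∑ t ∈ Finset.range T, c t ≤ 4 * (V 0 - V T) := by
    intro T
    induction T with
    | zero => simp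
    | succ T ih => rw [Finset.sum_range_succ]; have := (h T (hle T)).1; linarith
  have hsum' : ∀ T, ∑ t ∈ Finset.range T, c t ≤ 4 * V 0 := fun T => by
    linarith [hsum T, hV T]
  have hS : Summable c := summable_of_sum_range_le hc hsum'
  refine ⟨hS, ?_⟩
  have herr : ∀ T, |∑ t ∈ Finset.range T, c t + V T - V 0|
      ≤ 2 * (s * √(V 0)) * ∑ t ∈ Finset.range T, c t := by
    intro T
    induction T with
    | zero => simp
    | succ T ih =>
      rw [Finset.sum_range_succ, mul_add]
      have h1 := (h T (hle T)).2
      have h2 : 2 * (s * √(V T)) * c T ≤ 2 * (s * √(V 0)) * c T := by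
        have := Real.sqrt_le_sqrt (hle T)
        have := hc T
        gcongr
      have h3 := abs_add_le (∑ t ∈ Finset.range T, c t + V T - V 0) (V (T + 1) - (V T - c T))
      have h4 : (∑ t ∈ Finset.range T, c t + V T - V 0) + (V (T + 1) - (V T - c T))
        = ∑ t ∈ Finset.range T, c t + c T + V (T + 1) - V 0 := by ring
      rw [h4] at h3
      linarith
  have hc0 := hS.tendsto_atTop_zero
  have hV0 : Filter.Tendsto V Filter.atTop (nhds 0) := by
    refine squeeze_zero hV hVp ?_
    simpa using hc0.const_mul p
  have hlim := ((hS.hasSum.tendsto_sum_nat.add hV0).sub_const (V 0)).abs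
  rw [add_zero] at hlim
  refine le_of_tendsto hlim (Filter.Eventually.of_forall fun T => (herr T).trans ?_)
  calc 2 * (s * √(V 0)) * ∑ t ∈ Finset.range T, c t ≤ 2 * (s * √(V 0)) * (4 * V 0) := by
        gcongr; exact hsum' T
    _ = _ := by ring

lemma aux_psd {n : ℕ} (Q : Matrix (Fin n) (Fin n) ℝ) (hQ : (Q - 1).PosSemidef) (x : Fin n → ℝ) :
    evnorm x ^ 2 ≤ x ⬝ᵥ Q.mulVec x := by
  have h := hQ.dotProduct_mulVec_nonneg x
  rw [star_trivial, Matrix.sub_mulVec, Matrix.one_mulVec, dotProduct_sub, aux_sq] at h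
  linarith

lemma aux_psd_symm {n : ℕ} (Q : Matrix (Fin n) (Fin n) ℝ) (hQ : (Q - 1).PosSemidef) : Qᵀ = Q := by
  have h := hQ.isHermitian
  unfold Matrix.IsHermitian at h
  rw [Matrix.conjTranspose_eq_transpose_of_trivial, Matrix.transpose_sub,
    Matrix.transpose_one] at h
  exact sub_left_injective h

lemma aux_quad2 {d m : ℕ} (K : Matrix (Fin m) (Fin d) ℝ) (R : Matrix (Fin m) (Fin m) ℝ)
    (x : Fin d → ℝ) :
    x ⬝ᵥ (Kᵀ * R * K).mulVec x = (K.mulVec x) ⬝ᵥ R.mulVec (K.mulVec x) := by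
  rw [← Matrix.mulVec_mulVec, ← Matrix.mulVec_mulVec, Matrix.dotProduct_mulVec x Kᵀ,
    Matrix.vecMul_transpose]

/-- Similarity of costs: for initial states in the Lyapunov sublevel set, the nonlinear
cost converges and differs from the linearized cost `x₀ᵀPx₀` by at most `8β‖x₀‖³‖P‖⁴`. -/
theorem similarity_of_costs {d m : ℕ}
    (G : (Fin d → ℝ) → (Fin m → ℝ) → (Fin d → ℝ))
    (A : Matrix (Fin d) (Fin d) ℝ) (B : Matrix (Fin d) (Fin m) ℝ)
    (Q : Matrix (Fin d) (Fin d) ℝ) (R : Matrix (Fin m) (Fin m) ℝ)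
    (K : Matrix (Fin m) (Fin d) ℝ)
    (β rnl : ℝ) (hβ : 1 ≤ β) (hrnl0 : 0 < rnl) (hrnl1 : rnl ≤ 1)
    (hf : ∀ (x : Fin d → ℝ) (u : Fin m → ℝ), evnorm x + evnorm u ≤ rnl →
      evnorm (G x u - (A.mulVec x + B.mulVec u)) ≤ β * (evnorm x ^ 2 + evnorm u ^ 2))
    (γ : ℝ) (hγ : γ ∈ Set.Ioc (0 : ℝ) 1)
    (hQ : (Q - 1).PosSemidef) (hR : (R - 1).PosSemidef)
    (hstab : IsStable (Real.sqrt γ • (A + B * K)))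
    (x : ℕ → Fin d → ℝ)
    (hstep : ∀ t : ℕ, x (t + 1) = Real.sqrt γ • G (x t) (K.mulVec (x t)))
    (hV0 : x 0 ⬝ᵥ (lyapP A B Q R K γ).mulVec (x 0)
        ≤ rnl ^ 2 / (4 * β ^ 2 * opNorm (lyapP A B Q R K γ) ^ 3)) :
    Summable (fun t : ℕ => x t ⬝ᵥ (Q + Kᵀ * R * K).mulVec (x t))
    ∧ |(∑' t : ℕ, x t ⬝ᵥ (Q + Kᵀ * R * K).mulVec (x t))
          - x 0 ⬝ᵥ (lyapP A B Q R K γ).mulVec (x 0)|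
        ≤ 8 * β * evnorm (x 0) ^ 3 * opNorm (lyapP A B Q R K γ) ^ 4 := by
  obtain ⟨hγ0, hγ1⟩ := hγ
  rcases Nat.eq_zero_or_pos d with hd | hd
  · subst hd
    have e0 : ∀ t, x t = 0 := fun t => Subsingleton.elim _ _
    have hz : evnorm (0 : Fin 0 → ℝ) = 0 := norm_zero
    simp only [e0, hz, zero_dotProduct, tsum_zero]
    exact ⟨summable_zero, by simp⟩
  set P := lyapP A B Q R K γ with hPdef
  set N := Real.sqrt γ • (A + B * K) with hN
  set S := Q + Kᵀ * R * K with hS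
  have hsq : Real.sqrt γ ^ 2 = γ := Real.sq_sqrt hγ0.le
  have hP : P = ∑' t : ℕ, (N ^ t)ᵀ * S * N ^ t := by
    rw [hPdef, lyapP]
    refine tsum_congr fun t => ?_
    rw [hN, smul_pow, Matrix.transpose_smul, Matrix.smul_mul, Matrix.smul_mul, Matrix.mul_smul,
      smul_smul, ← pow_add, ← two_mul, pow_mul, hsq]
  have hsum := aux_summable N S hstab
  have hSsym : Sᵀ = S := by
    rw [hS, Matrix.transpose_add, Matrix.transpose_mul, Matrix.transpose_mul,
      Matrix.transpose_transpose, aux_psd_symm Q hQ, aux_psd_symm R hR, Matrix.mul_assoc]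
  have hSc : ∀ y : Fin d → ℝ, evnorm y ^ 2 + evnorm (K.mulVec y) ^ 2 ≤ y ⬝ᵥ S.mulVec y := by
    intro y
    rw [hS, Matrix.add_mulVec, dotProduct_add, aux_quad2]
    exact add_le_add (aux_psd Q hQ y) (aux_psd R hR _)
  have hS0 : ∀ y : Fin d → ℝ, 0 ≤ y ⬝ᵥ S.mulVec y := fun y =>
    le_trans (by positivity) (hSc y)
  have hlyap := aux_lyap N S hsum P hP
  have hPsym := aux_symm N S hSsym P hP
  have hPn := aux_nonneg N S hS0 hsum P hP
  have hVc : ∀ y : Fin d → ℝ, (N.mulVec y) ⬝ᵥ P.mulVec (N.mulVec y)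
      = y ⬝ᵥ P.mulVec y - y ⬝ᵥ S.mulVec y := by
    intro y
    have h1 : y ⬝ᵥ P.mulVec y = y ⬝ᵥ (S + Nᵀ * P * N).mulVec y := by rw [← hlyap]
    rw [Matrix.add_mulVec, dotProduct_add, aux_quad] at h1
    linarith
  have hcV : ∀ y : Fin d → ℝ, y ⬝ᵥ S.mulVec y ≤ y ⬝ᵥ P.mulVec y := fun y => by
    linarith [hVc y, hPn (N.mulVec y)]
  have hp : 1 ≤ opNorm P := by
    let e : Fin d → ℝ := Pi.single ⟨0, hd⟩ 1
    have h1 : evnorm e ^ 2 = 1 := by rw [← aux_sq]; simp [e]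
    have h2 := aux_op P e
    have h3 := hSc e
    have h4 := hcV e
    rw [h1] at h2 h3
    nlinarith [sq_nonneg (evnorm (K.mulVec e))]
  have hp0 : 0 < opNorm P := by linarith
  have hVp : ∀ y : Fin d → ℝ, y ⬝ᵥ P.mulVec y ≤ opNorm P * (y ⬝ᵥ S.mulVec y) := by
    intro y
    refine (aux_op P y).trans ?_
    have := hSc y
    gcongr
    linarith [sq_nonneg (evnorm (K.mulVec y))]
  have main := aux_sum (fun t => x t ⬝ᵥ P.mulVec (x t)) (fun t => x t ⬝ᵥ S.mulVec (x t))
    (opNorm P) (β * √(opNorm P)) (by positivity) (fun t => hS0 _) (fun t => hPn _)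
    (fun t => hVp _) (by
      intro t ht
      have ht' := le_trans ht hV0
      set y := x t with hy
      set f := G y (K.mulVec y) - (A.mulVec y + B.mulVec (K.mulVec y)) with hfdef
      have hx1 : x (t + 1) = N.mulVec y + Real.sqrt γ • f := by
        rw [hstep t, hfdef, hN, Matrix.smul_mulVec, Matrix.add_mulVec, ← Matrix.mulVec_mulVec,
          ← smul_add]
        congr 1
        abel
      have hcs := aux_cs P hPsym hPn (N.mulVec y) (Real.sqrt γ • f)
      rw [← hx1, hVc] at hcs
      have hsmall : evnorm y + evnorm (K.mulVec y) ≤ rnl := by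
        refine aux_sqle ?_ hrnl0.le
        have h1 := hSc y
        have h2 := hcV y
        have h3 : y ⬝ᵥ P.mulVec y ≤ rnl ^ 2 / 4 := by
          refine ht'.trans ?_
          have : (1 : ℝ) ≤ β ^ 2 * opNorm P ^ 3 :=
            one_le_mul_of_one_le_of_one_le (one_le_pow₀ hβ) (one_le_pow₀ hp)
          apply div_le_div_of_nonneg_left (by positivity) (by norm_num)
          linarith
        nlinarith [sq_nonneg (evnorm y - evnorm (K.mulVec y)), sq_nonneg rnl]
      have hff := hf y (K.mulVec y) hsmall
      refine aux_step (y ⬝ᵥ P.mulVec y) (y ⬝ᵥ S.mulVec y) _ _ _ (opNorm P) β rnl (evnorm f)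
        hβ hrnl0 hrnl1 hp (hS0 y) (by linarith [hcV y]) (hVp y) hcs.2 (hPn _) ?_ (aux_evn _)
        ?_ hcs.1 ht'
      · refine (aux_op P _).trans ?_
        rw [← aux_sq, ← aux_sq, smul_dotProduct, dotProduct_smul, smul_eq_mul, smul_eq_mul,
          ← mul_assoc (√γ), ← sq, hsq]
        have : 0 ≤ f ⬝ᵥ f := by rw [aux_sq]; positivity
        gcongr
        nlinarith
      · refine hff.trans ?_
        have := hSc y
        gcongr)
  refine ⟨main.1, main.2.trans ?_⟩
  have hx0 := aux_evn (x 0)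
  have h1 := aux_op P (x 0)
  have h2 : √(opNorm P) * √(x 0 ⬝ᵥ P.mulVec (x 0)) ≤ opNorm P * evnorm (x 0) := by
    rw [← Real.sqrt_mul hp0.le]
    refine Real.sqrt_le_iff.2 ⟨by positivity, ?_⟩
    have := mul_le_mul_of_nonneg_left h1 hp0.le
    linarith
  have hq : (opNorm P) ^ 2 ≤ (opNorm P) ^ 4 := pow_le_pow_right₀ hp (by norm_num)
  have h0 := hPn (x 0)
  calc 8 * (β * √(opNorm P)) * √(x 0 ⬝ᵥ P.mulVec (x 0)) * (x 0 ⬝ᵥ P.mulVec (x 0))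
      = 8 * β * (√(opNorm P) * √(x 0 ⬝ᵥ P.mulVec (x 0))) * (x 0 ⬝ᵥ P.mulVec (x 0)) := by ring
    _ ≤ 8 * β * (opNorm P * evnorm (x 0)) * (opNorm P * evnorm (x 0) ^ 2) := by gcongr
    _ = 8 * β * evnorm (x 0) ^ 3 * opNorm P ^ 2 := by ring
    _ ≤ _ := by gcongr
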